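/- arXiv:2412.13938 — 2 statements merged into one kernel-verified Lean document; each statement's English description precedes it below -/
import Mathlib

section
/- If an element x_{ik+m} of a local greedy subsequence has a positive fingerprint, i.e., x_{ik+m} ∉ [x_{m-1}, x_{(i-1)k+m}), then x_{ik+m} is an endpoint of an optimal solution, and the next k* greedy steps form an optimal partition. -/
open Set

/-- The closed clockwise arc `[a, b]` on a circularly ordered boundary. -/
def arcCC {α : Type*} [CircularOrder α] (a b : α) : Set α := {x | Btw.btw a x b}

/-- The half-open clockwise arc `(a, b]`. -/
def arcOC {α : Type*} [CircularOrder α] (a b : α) : Set α := {x | Btw.btw a x b ∧ x ≠ a}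

/-- The half-open clockwise arc `[a, b)`. -/
def arcCO {α : Type*} [CircularOrder α] (a b : α) : Set α := {x | Btw.btw a x b ∧ x ≠ b}

/-- Cyclic successor of an index. -/
def nextIdx {k : ℕ} (i : Fin k) : Fin k := ⟨(i.val + 1) % k, Nat.mod_lt _ i.pos⟩

/-- `y 0, …, y (k-1)` partitions the circular boundary into `k` visible intervals:
each consecutive interval is visible and the intervals cover the whole boundary. -/
def IsPartition {α : Type*} [CircularOrder α] (Vis : α → α → Prop) {k : ℕ}
    (y : Fin k → α) : Prop :=
  (∀ i : Fin k, Vis (y i) (y (nextIdx i))) ∧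
    (⋃ i : Fin k, arcCC (y i) (y (nextIdx i))) = Set.univ

/-- An optimal solution: a partition into visible intervals of minimum size. -/
def IsOptimalPartition {α : Type*} [CircularOrder α] (Vis : α → α → Prop) {k : ℕ}
    (y : Fin k → α) : Prop :=
  IsPartition Vis y ∧ ∀ (m : ℕ) (z : Fin m → α), IsPartition Vis z → k ≤ m

/-!
Unroll the boundary to its universal cover, a linear order with a deck transformation `T` (one
revolution); the greedy map lifts to a monotone map `g` commuting with `T`. If no point sees the
whole boundary, `s` visible intervals suffice from the endpoint `π x` on exactly when
`T x ≤ g^[s] x`, and this inequality is inherited by all later points of the orbit of `x`.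

A partition into `k*` intervals gives some `p` with `T p ≤ g^[k*] p`. Comparing the orbits of `p`
and of the starting point `x` gives `T^[n] x ≤ g^[k* * n + 1] x`; since
`g^[k] x < T x ≤ g^[k + 1] x`, it follows that `k* = k` or `k* = k + 1`. In the second case every
point of the orbit is an endpoint of an optimal solution. In the first case, if some point `a` of
the `m`-th local greedy subsequence fails to satisfy `T a ≤ g^[k] a`, then the comparison traps
`g^[k] a` between a translate of `g^[m - 1] x` and `T a`, so its fingerprint is negative.
-/

section Cover

variable {α : Type*} [CircularOrder α]

theorem exists_linearOrder_forall_btw (o : α) :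
    ∃ _ : LinearOrder α, ∀ a b c : α, a ≤ b → b ≤ c → Btw.btw a b c := by
  classical
  let r : α → α → Prop := fun a b => SBtw.sbtw o a b ∨ (a = o ∧ b ≠ o)
  have hr : IsStrictTotalOrder α r :=
    { irrefl := by
        rintro a (h | ⟨rfl, h⟩)
        exacts [sbtw_irrefl_right h, h rfl]
      trans := by
        rintro a b c (hab | ⟨rfl, hb⟩) (hbc | ⟨rfl, -⟩)
        · exact Or.inl (hab.trans_right hbc)
        · exact (sbtw_irrefl_left_right hab).elim
        · exact Or.inr ⟨rfl, fun hc => sbtw_irrefl_left_right (hc ▸ hbc)⟩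
        · exact (hb rfl).elim
      trichotomous := by
        intro a b hab hba
        simp only [r, sbtw_iff_not_btw, not_or, not_not, not_and] at hab hba
        by_cases ha : a = o
        · exact ha.trans (hab.2 ha).symm
        by_cases hb : b = o
        · exact (hba.2 hb).trans hb.symm
        rcases hab.1.antisymm hba.1.cyclic_right with h | h | h
        exacts [h.symm, (ha h).elim, (hb h.symm).elim] }
  refine ⟨linearOrderOfSTO r, ?_⟩
  rintro a b c (rfl | hab) (rfl | hbc)
  · exact btw_rfl
  · exact btw_rfl_left
  · exact btw_rfl_right
  rcases hab with hab | ⟨rfl, hb⟩ <;> rcases hbc with hbc | ⟨rfl, -⟩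
  · exact (hbc.cyclic_right.trans_left hab).cyclic_left.btw
  · exact (sbtw_irrefl_left_right hab).elim
  · exact hbc.btw
  · exact (hb rfl).elim

/-- A universal cover `β` of the circular order `α`, in the way `ℝ` covers the circle: `shift` is
the deck transformation that moves every point one revolution clockwise. -/
structure CircularCover (β α : Type*) [LinearOrder β] [CircularOrder α] where
  proj : β → α
  shift : β → β
  strictMono_shift : StrictMono shift
  proj_shift : ∀ x, proj (shift x) = proj x
  bijOn_proj : ∀ x, BijOn proj (Ico x (shift x)) univ
  btw_proj : ∀ {a b c}, a ≤ b → b ≤ c → c ≤ shift a → Btw.btw (proj a) (proj b) (proj c)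

/-- The cover by `ℤ` many consecutive copies of `α`, for a linear order on `α` obtained by cutting
the circular order open at one point. -/
def CircularCover.ofLinearOrder [LinearOrder α]
    (h : ∀ a b c : α, a ≤ b → b ≤ c → Btw.btw a b c) : CircularCover (ℤ ×ₗ α) α where
  proj x := (ofLex x).2
  shift x := toLex ((ofLex x).1 + 1, (ofLex x).2)
  strictMono_shift x y hxy := by
    simpa only [Prod.Lex.toLex_lt_toLex, add_lt_add_iff_right, add_left_inj] using
      Prod.Lex.lt_iff.1 hxy
  proj_shift _ := rfl
  bijOn_proj x := by
    refine ⟨mapsTo_univ _ _, fun y hy z hz hyz => ?_, fun a _ => ?_⟩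
    · simp only [mem_Ico, Prod.Lex.le_iff, Prod.Lex.lt_iff, ofLex_toLex] at hy hz
      refine ofLex.injective (Prod.ext ?_ hyz)
      grind
    · rcases le_or_gt (ofLex x).2 a with ha | ha
      · exact ⟨toLex ((ofLex x).1, a), by simp [Prod.Lex.le_iff, Prod.Lex.lt_iff, ha], rfl⟩
      · exact ⟨toLex ((ofLex x).1 + 1, a), by simp [Prod.Lex.le_iff, Prod.Lex.lt_iff, ha], rfl⟩
  btw_proj {a b c} hab hbc hca := by
    simp only [Prod.Lex.le_iff, ofLex_toLex] at hab hbc hca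
    rcases hab with hab | hab <;> rcases hbc with hbc | hbc <;> rcases hca with hca | hca <;>
      try omega
    · exact (h _ _ _ hbc.2 hca.2).cyclic_right
    · exact (h _ _ _ hca.2 hab.2).cyclic_left
    · exact h _ _ _ hab.2 hbc.2

theorem exists_circularCover.{u} {α : Type u} [CircularOrder α] (a : α) :
    ∃ (β : Type u) (_ : LinearOrder β) (c : CircularCover β α) (x : β), c.proj x = a := by
  obtain ⟨_, h⟩ := exists_linearOrder_forall_btw a
  exact ⟨ℤ ×ₗ α, inferInstance, .ofLinearOrder h, toLex (0, a), rfl⟩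

namespace CircularCover

variable {β : Type*} [LinearOrder β] (c : CircularCover β α)

theorem lt_shift (x : β) : x < c.shift x := by
  obtain ⟨y, hy, -⟩ := (c.bijOn_proj x).surjOn (mem_univ (c.proj x))
  exact hy.1.trans_lt hy.2

theorem proj_iterate_shift (n : ℕ) (x : β) : c.proj (c.shift^[n] x) = c.proj x := by
  simpa using Function.Semiconj.iterate_right (f := c.proj) (gb := id) c.proj_shift n x

theorem arcCC_proj {x y : β} (hy : y ∈ Ioo x (c.shift x)) :
    arcCC (c.proj x) (c.proj y) = c.proj '' Icc x y := by
  refine Subset.antisymm (fun a ha => ?_) ?_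
  · obtain ⟨z, hz, rfl⟩ := (c.bijOn_proj x).surjOn (mem_univ a)
    refine ⟨z, ⟨hz.1, le_of_not_gt fun hyz => ?_⟩, rfl⟩
    have hx : x ∈ Ico x (c.shift x) := left_mem_Ico.2 (c.lt_shift x)
    have hinj := (c.bijOn_proj x).injOn
    rcases Btw.btw.antisymm ha (c.btw_proj hy.1.le hyz.le hz.2.le).cyclic_left with h | h | h
    · exact (hy.1.trans hyz).ne (hinj hx hz h)
    · exact hyz.ne' (hinj hz (Ioo_subset_Ico_self hy) h)
    · exact hy.1.ne' (hinj (Ioo_subset_Ico_self hy) hx h)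
  · rintro _ ⟨z, hz, rfl⟩
    exact c.btw_proj hz.1 hz.2 hy.2.le

theorem arcCO_proj {x y : β} (hy : y ∈ Ioo x (c.shift x)) :
    arcCO (c.proj x) (c.proj y) = c.proj '' Ico x y := by
  have hsub : Icc x y ⊆ Ico x (c.shift x) := Icc_subset_Ico_right hy.2
  have hmem : {y} ⊆ Icc x y := singleton_subset_iff.2 (right_mem_Icc.2 hy.1.le)
  rw [← Icc_sdiff_right, ((c.bijOn_proj x).injOn.mono hsub).image_sdiff_subset hmem,
    ← c.arcCC_proj hy, image_singleton]
  rfl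

/-- The lift of a self-map of `α`: `c.lift G x` is the first point over `G (c.proj x)`, clockwise
from `x` on. -/
noncomputable def lift (G : α → α) (x : β) : β :=
  ((c.bijOn_proj x).surjOn (mem_univ (G (c.proj x)))).choose

variable (G : α → α)

theorem lift_mem_Ico (x : β) : c.lift G x ∈ Ico x (c.shift x) :=
  ((c.bijOn_proj x).surjOn (mem_univ (G (c.proj x)))).choose_spec.1

theorem proj_lift (x : β) : c.proj (c.lift G x) = G (c.proj x) :=
  ((c.bijOn_proj x).surjOn (mem_univ (G (c.proj x)))).choose_spec.2

theorem proj_iterate_lift (n : ℕ) (x : β) :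
    c.proj ((c.lift G)^[n] x) = G^[n] (c.proj x) :=
  Function.Semiconj.iterate_right (c.proj_lift G) n x

theorem commute_lift_shift : Function.Commute (c.lift G) c.shift := fun x => by
  have hx := c.lift_mem_Ico G x
  refine (c.bijOn_proj (c.shift x)).injOn (c.lift_mem_Ico G _)
    ⟨c.strictMono_shift.monotone hx.1, c.strictMono_shift hx.2⟩ ?_
  simp only [proj_lift, proj_shift]

end CircularCover

end Cover

section CommutingMaps

variable {β : Type*}

theorem exists_iterate_mem_Icc [LinearOrder β] {g : β → β} (hg : Monotone g) {a p : β}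
    (hp : p < a) {n : ℕ} (ha : a ≤ g^[n] p) : ∃ l ≤ n, g^[l] p ∈ Icc a (g a) := by
  induction n with
  | zero => exact (hp.not_ge ha).elim
  | succ n ih =>
    rcases le_or_gt a (g^[n] p) with h | h
    · obtain ⟨l, hl, hmem⟩ := ih h
      exact ⟨l, hl.trans n.le_succ, hmem⟩
    · refine ⟨n + 1, le_rfl, ha, ?_⟩
      rw [Function.iterate_succ_apply']
      exact hg h.le

theorem map_iterate_le_iterate_iterate [Preorder β] {g T : β → β} (hg : Monotone g)
    (hgT : Function.Commute g T) {x : β} {s : ℕ} (hx : T x ≤ g^[s] x) (n : ℕ) :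
    T (g^[n] x) ≤ g^[s] (g^[n] x) := by
  rw [← (hgT.iterate_left n).eq, (Function.Commute.iterate_iterate_self g s n).eq]
  exact hg.iterate n hx

theorem iterate_iterate_le_map_iterate [Preorder β] {g T : β → β} (hg : Monotone g)
    (hgT : Function.Commute g T) {x : β} {s : ℕ} (hx : g^[s] x ≤ T x) (n : ℕ) :
    g^[s] (g^[n] x) ≤ T (g^[n] x) := by
  rw [← (hgT.iterate_left n).eq, (Function.Commute.iterate_iterate_self g s n).eq]
  exact hg.iterate n hx

-- The orbit of `p` enters `[T x, g (T x)]`, so up to a translation the orbit of `x` trails it by at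
-- most one step.
theorem iterate_le_iterate_mul_add_one [LinearOrder β] {g T : β → β} (hg : Monotone g)
    (hgT : Function.Commute g T) (hT : StrictMono T) {p x : β} {s N : ℕ}
    (hp : T p ≤ g^[s] p) (hpx : p < T x) (hxp : T x ≤ g^[N] p) (n : ℕ) :
    T^[n] x ≤ g^[s * n + 1] x := by
  obtain ⟨l, -, hxq, hqx⟩ := exists_iterate_mem_Icc hg hpx hxp
  set q := g^[l] p
  have hq : T q ≤ g^[s] q := map_iterate_le_iterate_iterate hg hgT hp l
  refine hT.le_iff_le.1 ?_
  calc T (T^[n] x) = T^[n] (T x) := (Function.Commute.self_iterate T n).eq x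
    _ ≤ T^[n] q := hT.monotone.iterate n hxq
    _ ≤ (g^[s])^[n] q :=
      (hgT.symm.iterate_right s).iterate_le_of_map_le hT.monotone (hg.iterate s) hq n
    _ = g^[s * n] q := by rw [Function.iterate_mul]
    _ ≤ g^[s * n] (g (T x)) := hg.iterate _ hqx
    _ = T (g^[s * n + 1] x) := by
      rw [← Function.iterate_succ_apply, (hgT.iterate_left _).eq]

end CommutingMaps

section Partition

variable {α : Type*} [CircularOrder α] {Vis : α → α → Prop}

theorem apply_nextIdx {γ : Type*} {s : ℕ} {f : ℕ → γ} (hf : f s = f 0) (t : Fin s) :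
    f (nextIdx t) = f (t + 1) := by
  rcases (show t.val + 1 ≤ s from t.isLt).lt_or_eq with h | h
  · simp [nextIdx, Nat.mod_eq_of_lt h]
  · simp [nextIdx, h, hf]

theorem isPartition_one_iff {y : Fin 1 → α} : IsPartition Vis y ↔ Vis (y 0) (y 0) := by
  have hnext (i : Fin 1) : nextIdx i = 0 := Subsingleton.elim _ _
  have hcover : ⋃ i : Fin 1, arcCC (y i) (y 0) = univ :=
    eq_univ_of_forall fun a => mem_iUnion.2 ⟨0, btw_refl_left_right _ a⟩
  simp only [IsPartition, Fin.forall_fin_one, hnext, hcover, and_true]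

theorem IsPartition.pos {s : ℕ} {y : Fin s → α} (hy : IsPartition Vis y) (a : α) : 0 < s := by
  obtain ⟨i, -⟩ := mem_iUnion.1 (hy.2.symm ▸ mem_univ a)
  exact i.pos

theorem IsOptimalPartition.of_vis_self
    (hMono : ∀ a b c d : α, arcCC a b ⊆ arcCC c d → Vis c d → Vis a b)
    {s : ℕ} {y : Fin s → α} (hy : IsOptimalPartition Vis y) {a : α} (ha : Vis a a)
    (z : Fin s → α) : IsOptimalPartition Vis z := by
  obtain rfl : s = 1 :=
    (hy.2 1 (fun _ => a) (isPartition_one_iff.2 ha)).antisymm (hy.1.pos a)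
  have hz : Vis (z 0) (z 0) := hMono _ _ a a (fun b _ => btw_refl_left_right a b) ha
  exact ⟨isPartition_one_iff.2 hz, hy.2⟩

theorem CircularCover.isPartition_proj {β : Type*} [LinearOrder β] (c : CircularCover β α)
    {q : ℕ → β} {s : ℕ} (hs : q s = c.shift (q 0)) (hq : ∀ t < s, q (t + 1) ≤ c.shift (q t))
    (hVis : ∀ t < s, Vis (c.proj (q t)) (c.proj (q (t + 1)))) :
    IsPartition Vis fun t : Fin s => c.proj (q t) := by
  have hnext (t : Fin s) : c.proj (q (nextIdx t)) = c.proj (q (t + 1)) :=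
    apply_nextIdx (f := fun t => c.proj (q t)) (by rw [hs, c.proj_shift]) t
  refine ⟨fun t => ?_, eq_univ_of_forall fun a => ?_⟩
  · simpa only [hnext] using hVis t t.isLt
  obtain ⟨b, hb, rfl⟩ := (c.bijOn_proj (q 0)).surjOn (mem_univ a)
  rw [← hs] at hb
  obtain ⟨t, ht, hbt⟩ := mem_iUnion₂.1 (Ico_subset_biUnion_Ico s q hb)
  rw [Finset.mem_range] at ht
  refine mem_iUnion.2 ⟨⟨t, ht⟩, ?_⟩
  simp only [hnext]
  exact c.btw_proj hbt.1 hbt.2.le (hq t ht)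

end Partition

/-- A visibility relation on the boundary of a polygon that is not star-shaped, together with its
greedy map: `G x` is the clockwise farthest point visible from `x`. The arc from `a` to `a` is the
whole boundary, so `irrefl` says that no point sees all of it. -/
structure IsGreedyMap {α : Type*} [CircularOrder α] (Vis : α → α → Prop) (G : α → α) : Prop where
  irrefl : ∀ a, ¬ Vis a a
  of_arcCC_subset : ∀ a b c d, arcCC a b ⊆ arcCC c d → Vis c d → Vis a b
  vis_apply : ∀ x, Vis x (G x)
  btw_apply : ∀ x y, Vis x y → Btw.btw x y (G x)

namespace IsGreedyMap

variable {α β : Type*} [CircularOrder α] [LinearOrder β] {Vis : α → α → Prop} {G : α → α}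
  (hG : IsGreedyMap Vis G) (c : CircularCover β α)
include hG

theorem lift_mem_Ioo (x : β) : c.lift G x ∈ Ioo x (c.shift x) := by
  have hx := c.lift_mem_Ico G x
  refine ⟨hx.1.lt_of_ne fun h => hG.irrefl (c.proj x) ?_, hx.2⟩
  nth_rw 2 [h]
  rw [c.proj_lift]
  exact hG.vis_apply _

theorem strictMono_iterate_lift (x : β) : StrictMono fun n => (c.lift G)^[n] x :=
  strictMono_nat_of_lt_succ fun n => by
    rw [Function.iterate_succ_apply']
    exact (hG.lift_mem_Ioo c _).1

theorem vis_proj_of_le_lift {x y z : β} (hxy : x ≤ y) (hyz : y < z) (hz : z ≤ c.lift G x) :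
    Vis (c.proj y) (c.proj z) := by
  have hx := hG.lift_mem_Ioo c x
  have hzy : z ∈ Ioo y (c.shift y) :=
    ⟨hyz, hz.trans_lt (hx.2.trans_le (c.strictMono_shift.monotone hxy))⟩
  refine hG.of_arcCC_subset _ _ (c.proj x) (c.proj (c.lift G x)) ?_ ?_
  · rw [c.arcCC_proj hzy, c.arcCC_proj hx]
    exact image_mono (Icc_subset_Icc hxy hz)
  · rw [c.proj_lift]
    exact hG.vis_apply _

theorem le_lift_of_vis_proj {x y : β} (hy : y ∈ Ico x (c.shift x))
    (hVis : Vis (c.proj x) (c.proj y)) : y ≤ c.lift G x := by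
  have hmem : c.proj y ∈ arcCC (c.proj x) (c.proj (c.lift G x)) := by
    rw [c.proj_lift]
    exact hG.btw_apply _ _ hVis
  have hx := hG.lift_mem_Ioo c x
  rw [c.arcCC_proj hx] at hmem
  obtain ⟨z, hz, hzy⟩ := hmem
  rw [← (c.bijOn_proj x).injOn ⟨hz.1, hz.2.trans_lt hx.2⟩ hy hzy]
  exact hz.2

theorem monotone_lift : Monotone (c.lift G) := fun x y hxy => by
  rcases le_or_gt (c.lift G x) y with h | h
  · exact h.trans (c.lift_mem_Ico G y).1
  · have hx := (c.lift_mem_Ico G x).2.trans_le (c.strictMono_shift.monotone hxy)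
    exact hG.le_lift_of_vis_proj c ⟨h.le, hx⟩ (hG.vis_proj_of_le_lift c hxy h le_rfl)

theorem exists_mem_Ioc_lift {x : β} {a : α} (h : Vis (c.proj x) a) :
    ∃ y ∈ Ioc x (c.lift G x), c.proj y = a := by
  obtain ⟨y, hy, rfl⟩ := (c.bijOn_proj x).surjOn (mem_univ a)
  exact ⟨y, ⟨hy.1.lt_of_ne fun hxy => hG.irrefl _ (hxy ▸ h), hG.le_lift_of_vis_proj c hy h⟩, rfl⟩

theorem exists_mem_Ioc_iterate_lift {u : ℕ → α} (hu : ∀ n, Vis (u n) (u (n + 1))) {p : β}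
    (hp : c.proj p = u 0) (n : ℕ) :
    ∃ q ∈ Ioc p ((c.lift G)^[n + 1] p), c.proj q = u (n + 1) := by
  induction n with
  | zero => exact hG.exists_mem_Ioc_lift c (hp ▸ hu 0)
  | succ n ih =>
    obtain ⟨q, hq, hqu⟩ := ih
    obtain ⟨r, hr, hru⟩ := hG.exists_mem_Ioc_lift c (hqu ▸ hu (n + 1))
    refine ⟨r, ⟨hq.1.trans hr.1, hr.2.trans ?_⟩, hru⟩
    rw [Function.iterate_succ_apply']
    exact hG.monotone_lift c hq.2

theorem exists_shift_le_iterate_lift {s : ℕ} {y : Fin s → α} (hy : IsPartition Vis y) (x : β) :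
    ∃ p ∈ Ico x (c.shift x), c.shift p ≤ (c.lift G)^[s] p := by
  have hs : 0 < s := hy.pos (c.proj x)
  let u : ℕ → α := fun n => y ⟨n % s, n.mod_lt hs⟩
  have hu (n : ℕ) : Vis (u n) (u (n + 1)) := by
    simpa [nextIdx, u] using hy.1 ⟨n % s, n.mod_lt hs⟩
  obtain ⟨p, hpx, hpu⟩ := (c.bijOn_proj x).surjOn (mem_univ (u 0))
  obtain ⟨q, hq, hqu⟩ := hG.exists_mem_Ioc_iterate_lift c hu hpu (s - 1)
  rw [Nat.sub_add_cancel hs] at hq hqu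
  refine ⟨p, hpx, le_trans (le_of_not_gt fun hqp => hq.1.ne ?_) hq.2⟩
  refine (c.bijOn_proj p).injOn (left_mem_Ico.2 (c.lt_shift p)) ⟨hq.1.le, hqp⟩ ?_
  rw [hpu, hqu]
  simp [u]

theorem exists_isPartition {x : β} {s : ℕ} (hs : c.shift x ≤ (c.lift G)^[s] x) :
    ∃ r ≤ s, IsPartition Vis fun t : Fin r => c.proj ((c.lift G)^[t] x) := by
  classical
  have hex : ∃ n, c.shift x ≤ (c.lift G)^[n] x := ⟨s, hs⟩
  have hlt {t : ℕ} (ht : t < Nat.find hex) : (c.lift G)^[t] x < c.shift x :=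
    lt_of_not_ge (Nat.find_min hex ht)
  refine ⟨Nat.find hex, Nat.find_min' hex hs, ?_⟩
  -- The last greedy step is cut short at `c.shift x`, so that the partition closes up.
  let q : ℕ → β := fun t => min ((c.lift G)^[t] x) (c.shift x)
  have hq {t : ℕ} (ht : t < Nat.find hex) : q t = (c.lift G)^[t] x := min_eq_left (hlt ht).le
  have hq_zero : q 0 = x := min_eq_left (c.lt_shift x).le
  have hq_lt {t : ℕ} (ht : t < Nat.find hex) : q t < q (t + 1) := by
    rw [hq ht]
    exact lt_min (hG.strictMono_iterate_lift c x t.lt_succ_self) (hlt ht)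
  have hq_le {t : ℕ} (ht : t < Nat.find hex) : q (t + 1) ≤ c.lift G (q t) := by
    rw [hq ht, ← Function.iterate_succ_apply' (c.lift G)]
    exact min_le_left _ _
  have hpart : IsPartition Vis fun t : Fin (Nat.find hex) => c.proj (q t) :=
    c.isPartition_proj (by rw [hq_zero]; exact min_eq_right (Nat.find_spec hex))
      (fun t ht => (hq_le ht).trans (c.lift_mem_Ico G _).2.le)
      (fun t ht => hG.vis_proj_of_le_lift c le_rfl (hq_lt ht) (hq_le ht))
  simpa only [hq (Fin.isLt _)] using hpart

theorem isOptimalPartition {s : ℕ} {y : Fin s → α} (hy : IsOptimalPartition Vis y) {x : β}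
    (hx : c.shift x ≤ (c.lift G)^[s] x) :
    IsOptimalPartition Vis fun t : Fin s => c.proj ((c.lift G)^[t] x) := by
  obtain ⟨r, hr, hpart⟩ := hG.exists_isPartition c hx
  obtain rfl := hr.antisymm (hy.2 r _ hpart)
  exact ⟨hpart, hy.2⟩

theorem mem_arcCO_proj_lift_iff {x b : β} (hb : b ∈ Ico x (c.shift x)) :
    c.proj b ∈ arcCO (c.proj x) (c.proj (c.lift G x)) ↔ b < c.lift G x := by
  have hx := hG.lift_mem_Ioo c x
  rw [c.arcCO_proj hx, (c.bijOn_proj x).injOn.mem_image_iff (Ico_subset_Ico_right hx.2.le) hb]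
  exact ⟨fun h => h.2, fun h => ⟨hb.1, h⟩⟩

theorem shift_le_iterate_lift_of_mem_arcCO {x : β} {k : ℕ}
    (hk : c.proj ((c.lift G)^[k + 1] x) ∈ arcCO (c.proj x) (c.proj (c.lift G x))) :
    c.shift x ≤ (c.lift G)^[k + 1] x := by
  have hmono := (hG.strictMono_iterate_lift c x).monotone
  have hx : x ≤ (c.lift G)^[k + 1] x := hmono (Nat.zero_le (k + 1))
  by_contra! hlt
  rw [hG.mem_arcCO_proj_lift_iff c ⟨hx, hlt⟩] at hk
  exact hk.not_ge (hmono (Nat.le_add_left 1 k))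

theorem iterate_lift_lt_shift {x : β} {k : ℕ}
    (hk : c.proj ((c.lift G)^[k + 1] x) ∈ arcCO (c.proj x) (c.proj (c.lift G x)))
    (hkmin : ∀ j, c.proj ((c.lift G)^[j + 1] x) ∈ arcCO (c.proj x) (c.proj (c.lift G x)) → k ≤ j) :
    (c.lift G)^[k] x < c.shift x := by
  by_contra! hle
  obtain ⟨l, hlk, hl⟩ := exists_iterate_mem_Icc (hG.monotone_lift c) (c.lt_shift x) hle
  have hl2 : 2 ≤ l := by
    by_contra! hl2
    have hgx : c.lift G x < c.shift x := (hG.lift_mem_Ioo c x).2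
    have := (hG.strictMono_iterate_lift c x).monotone (Nat.le_of_lt_succ hl2)
    exact (hl.1.trans this).not_gt hgx
  obtain ⟨M, rfl⟩ := Nat.exists_eq_add_of_le' (one_le_two.trans hl2)
  have hcomm : c.lift G (c.shift x) = c.shift (c.lift G x) := c.commute_lift_shift G x
  rcases hl.2.lt_or_eq with hlt | heq
  · -- The `(M + 1)`-st step already lands in the first arc.
    have hmem := (hG.mem_arcCO_proj_lift_iff c
      ⟨hl.1, hlt.trans (hG.lift_mem_Ioo c _).2⟩).2 hlt
    rw [hcomm, c.proj_shift, c.proj_shift] at hmem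
    have := hkmin M hmem
    omega
  · -- The orbit of `g x` is periodic with period `M` on the boundary, so the arc is also hit
    -- `M` steps earlier.
    obtain ⟨n, rfl⟩ := Nat.exists_eq_add_of_le hlk
    have hper : (c.lift G)^[M + 1 + n + 1] x = c.shift ((c.lift G)^[n + 1 + 1] x) := by
      rw [show M + 1 + n + 1 = n + 1 + (M + 1) by omega, Function.iterate_add_apply, heq, hcomm,
        ((c.commute_lift_shift G).iterate_left (n + 1)).eq, ← Function.iterate_succ_apply]
    rw [hper, c.proj_shift] at hk
    have := hkmin _ hk
    omega

theorem proj_iterate_lift_mem_arcCO {x : β} {k : ℕ} (hk : (c.lift G)^[k] x ≤ c.shift x)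
    (hlow : ∀ n, c.shift^[n] x ≤ (c.lift G)^[k * n + 1] x) (i m : ℕ)
    (hlt : (c.lift G)^[(i + 1) * k + (m + 1)] x < c.shift ((c.lift G)^[i * k + (m + 1)] x)) :
    c.proj ((c.lift G)^[(i + 1) * k + (m + 1)] x) ∈
      arcCO (c.proj ((c.lift G)^[m] x)) (c.proj ((c.lift G)^[i * k + (m + 1)] x)) := by
  set g := c.lift G
  set T := c.shift
  have hcomm : Function.Commute g T := c.commute_lift_shift G
  have hmono : Monotone g := hG.monotone_lift c
  have hlower : T^[i + 1] (g^[m] x) ≤ g^[(i + 1) * k + (m + 1)] x := by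
    rw [← (hcomm.iterate_iterate m (i + 1)).eq,
      show (i + 1) * k + (m + 1) = m + (k * (i + 1) + 1) by ring, Function.iterate_add_apply g]
    exact hmono.iterate m (hlow (i + 1))
  have hupper : g^[i * k + (m + 1)] x ≤ T^[i] (g^[m + 1] x) := by
    rw [Function.iterate_add_apply, mul_comm, Function.iterate_mul]
    exact (hcomm.iterate_left k).iterate_le_of_map_le (hmono.iterate k)
      c.strictMono_shift.monotone (iterate_iterate_le_map_iterate hmono hcomm hk (m + 1)) i
  have hend : T (g^[i * k + (m + 1)] x) < T (T^[i + 1] (g^[m] x)) := by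
    rw [Function.iterate_succ_apply]
    refine c.strictMono_shift (hupper.trans_lt (c.strictMono_shift.iterate i ?_))
    rw [Function.iterate_succ_apply']
    exact (hG.lift_mem_Ioo c _).2
  rw [← c.proj_iterate_shift (i + 1) (g^[m] x), ← c.proj_shift (g^[i * k + (m + 1)] x),
    c.arcCO_proj ⟨hlower.trans_lt hlt, hend⟩]
  exact mem_image_of_mem _ ⟨hlower, hlt⟩

theorem shift_le_iterate_lift_of_notMem_arcCO {s : ℕ} {y : Fin s → α}
    (hy : IsOptimalPartition Vis y) {x : β} {k : ℕ} (hlt : (c.lift G)^[k] x < c.shift x)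
    (hle : c.shift x ≤ (c.lift G)^[k + 1] x) (i m : ℕ)
    (hfp : c.proj ((c.lift G)^[(i + 1) * k + (m + 1)] x) ∉
      arcCO (c.proj ((c.lift G)^[m] x)) (c.proj ((c.lift G)^[i * k + (m + 1)] x))) :
    c.shift ((c.lift G)^[(i + 1) * k + (m + 1)] x) ≤
      (c.lift G)^[s] ((c.lift G)^[(i + 1) * k + (m + 1)] x) := by
  have hmono := hG.monotone_lift c
  have hcomm := c.commute_lift_shift G
  obtain ⟨p, hpx, hp⟩ := hG.exists_shift_le_iterate_lift c hy.1 x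
  have hlow : ∀ n, c.shift^[n] x ≤ (c.lift G)^[s * n + 1] x :=
    iterate_le_iterate_mul_add_one hmono hcomm c.strictMono_shift hp hpx.2
      (hle.trans (hmono.iterate (k + 1) hpx.1))
  have hks : k < s * 1 + 1 :=
    (hG.strictMono_iterate_lift c x).lt_iff_lt.1 (hlt.trans_le (hlow 1))
  obtain ⟨r, hr, hpart⟩ := hG.exists_isPartition c hle
  have hsk : s ≤ k + 1 := (hy.2 r _ hpart).trans hr
  obtain rfl | rfl : s = k + 1 ∨ s = k := by omega
  · exact map_iterate_le_iterate_iterate hmono hcomm hle _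
  · have hclosed := not_lt.1 fun h => hfp (hG.proj_iterate_lift_mem_arcCO c hlt.le hlow i m h)
    have hidx : (i + 1) * s + (m + 1) = s + (i * s + (m + 1)) := by ring
    rw [hidx, Function.iterate_add_apply _ s] at hclosed ⊢
    exact map_iterate_le_iterate_iterate hmono hcomm hclosed s

end IsGreedyMap

theorem positive_fingerprint_implies_optimal_general {α : Type*} [CircularOrder α]
    (Vis : α → α → Prop) (G : α → α)
    (hMono : ∀ a b c d : α, arcCC a b ⊆ arcCC c d → Vis c d → Vis a b)
    (hVisG : ∀ x : α, Vis x (G x))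
    (hGmax : ∀ x y : α, Vis x y → Btw.btw x y (G x))
    (xs : ℕ → α) (hstep : ∀ n : ℕ, xs (n + 1) = G (xs n))
    (k : ℕ) (hk : xs (k + 1) ∈ arcCO (xs 0) (xs 1))
    (hkmin : ∀ j : ℕ, xs (j + 1) ∈ arcCO (xs 0) (xs 1) → k ≤ j)
    {kstar : ℕ} (y : Fin kstar → α) (hy : IsOptimalPartition Vis y)
    (m i : ℕ) (hm : 1 ≤ m) (hi : 1 ≤ i)
    (hfp : xs (i * k + m) ∉ arcCO (xs (m - 1)) (xs ((i - 1) * k + m))) :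
    (∃ (z : Fin kstar → α) (j : Fin kstar),
        IsOptimalPartition Vis z ∧ z j = xs (i * k + m)) ∧
      IsOptimalPartition Vis (fun t : Fin kstar => xs (i * k + m + t.val)) := by
  suffices hopt : IsOptimalPartition Vis fun t : Fin kstar => xs (i * k + m + t.val) from
    ⟨⟨_, ⟨0, hy.1.pos (xs 0)⟩, hopt, rfl⟩, hopt⟩
  by_cases hstar : ∃ a, Vis a a
  · exact hy.of_vis_self hMono hstar.choose_spec _
  have hG : IsGreedyMap Vis G := ⟨not_exists.1 hstar, hMono, hVisG, hGmax⟩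
  obtain ⟨β, _, c, x, hx⟩ := exists_circularCover (xs 0)
  have hxs (n : ℕ) : xs n = c.proj ((c.lift G)^[n] x) := by
    rw [c.proj_iterate_lift, hx]
    induction n with
    | zero => rfl
    | succ n ih => rw [hstep, ih, Function.iterate_succ_apply']
  obtain ⟨i, rfl⟩ := Nat.exists_eq_add_of_le' hi
  obtain ⟨m, rfl⟩ := Nat.exists_eq_add_of_le' hm
  simp only [hxs, add_tsub_cancel_right, Function.iterate_zero_apply, Function.iterate_one]
    at hk hkmin hfp
  have hclosed := hG.shift_le_iterate_lift_of_notMem_arcCO c hy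
    (hG.iterate_lift_lt_shift c hk hkmin) (hG.shift_le_iterate_lift_of_mem_arcCO c hk) i m hfp
  simpa only [hxs, Nat.add_comm _ (Fin.val _), Function.iterate_add_apply _ (Fin.val _)] using
    hG.isOptimalPartition c hy hclosed

/--
Positive fingerprint implies optimality.  Let `xs` be a greedy
sequence on the circular boundary of a non-star-shaped simple polygon with `k` steps in
the first revolution, and let `k*` be the optimal partition size.  If an element
`xs (i·k + m)` of the `m`-th local greedy subsequence has a positive fingerprint, i.e.
`xs (i·k + m) ∉ [xs (m-1), xs ((i-1)·k + m))`, then `xs (i·k + m)` is an endpoint of an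
optimal solution, and the next `k*` greedy steps form an optimal partition.
-/
theorem positive_fingerprint_implies_optimal {α : Type*} [CircularOrder α]
    (Vis : α → α → Prop) (G : α → α)
    (hMono : ∀ a b c d : α, arcCC a b ⊆ arcCC c d → Vis c d → Vis a b)
    (hVisG : ∀ x : α, Vis x (G x))
    (hGmax : ∀ x y : α, Vis x y → Btw.btw x y (G x))
    (hGne : ∀ x : α, G x ≠ x)
    (xs : ℕ → α) (hstep : ∀ n : ℕ, xs (n + 1) = G (xs n))
    (k : ℕ) (hk : xs (k + 1) ∈ arcCO (xs 0) (xs 1))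
    (hkmin : ∀ j : ℕ, xs (j + 1) ∈ arcCO (xs 0) (xs 1) → k ≤ j)
    {kstar : ℕ} (y : Fin kstar → α) (hy : IsOptimalPartition Vis y)
    (m i : ℕ) (hm1 : 1 ≤ m) (hmk : m ≤ k) (hi : 1 ≤ i)
    (hfp : xs (i * k + m) ∉ arcCO (xs (m - 1)) (xs ((i - 1) * k + m))) :
    (∃ (z : Fin kstar → α) (j : Fin kstar),
        IsOptimalPartition Vis z ∧ z j = xs (i * k + m)) ∧
      IsOptimalPartition Vis (fun t : Fin kstar => xs (i * k + m + t.val)) :=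
  positive_fingerprint_implies_optimal_general Vis G hMono hVisG hGmax xs hstep k hk hkmin y hy
    m i hm1 hi hfp
end

section
/- Let P be a simple polygon and a, b ∈ ∂P. The feasible region F([a,b]), consisting of all points of P that see every point of the boundary chain [a,b], is connected; moreover, for every convex subset C of P, the intersection C ∩ F([a,b]) is convex. -/
open Set

/-- Cyclic successor of an index. -/
def finNext {n : ℕ} (i : Fin n) : Fin n := ⟨(i.val + 1) % n, Nat.mod_lt _ i.pos⟩

/-- A simple polygon in the plane, given by its cyclic list of vertices: consecutive
vertices are joined by segments (the edges), non-adjacent edges are disjoint, and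
adjacent edges meet exactly in their shared vertex. -/
structure SimplePolygon where
  n : ℕ
  three_le : 3 ≤ n
  vtx : Fin n → ℝ × ℝ
  inj : Function.Injective vtx
  nonadj : ∀ i j : Fin n, j ≠ i → j ≠ finNext i → i ≠ finNext j →
    Disjoint (segment ℝ (vtx i) (vtx (finNext i)))
             (segment ℝ (vtx j) (vtx (finNext j)))
  adj : ∀ i : Fin n,
    segment ℝ (vtx i) (vtx (finNext i)) ∩
        segment ℝ (vtx (finNext i)) (vtx (finNext (finNext i)))
      = {vtx (finNext i)}

/-- The boundary `∂P` of the polygon: the union of its edges. -/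
def SimplePolygon.boundary (Q : SimplePolygon) : Set (ℝ × ℝ) :=
  ⋃ i : Fin Q.n, segment ℝ (Q.vtx i) (Q.vtx (finNext i))

/-- The closed region bounded by the polygon: the boundary together with all points
from which one cannot escape to infinity without crossing the boundary. -/
def SimplePolygon.region (Q : SimplePolygon) : Set (ℝ × ℝ) :=
  Q.boundary ∪ {x | ∀ S : Set (ℝ × ℝ), IsConnected S → Disjoint S Q.boundary →
    x ∈ S → Bornology.IsBounded S}

/-- `g` sees `x` in the polygon `Q`: the segment between them lies in the region. -/
def SimplePolygon.sees (Q : SimplePolygon) (g x : ℝ × ℝ) : Prop :=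
  segment ℝ g x ⊆ Q.region

/-- The visibility polygon of a point `a`: all points of the region visible from `a`. -/
def SimplePolygon.visPoly (Q : SimplePolygon) (a : ℝ × ℝ) : Set (ℝ × ℝ) :=
  {x | x ∈ Q.region ∧ Q.sees a x}

theorem SimplePolygon.npos (Q : SimplePolygon) : 0 < Q.n :=
  lt_of_lt_of_le (by norm_num) Q.three_le

/-- The piecewise-linear parametrization of the boundary: `param t` for `t ∈ [i, i+1]`
interpolates linearly between the `i`-th and `(i+1)`-st vertices (indices mod `n`), so
`param '' [s, t]` is the clockwise polygonal chain of the boundary from `param s` to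
`param t`. -/
noncomputable def SimplePolygon.param (Q : SimplePolygon) (t : ℝ) : ℝ × ℝ :=
  (1 - Int.fract t) • Q.vtx ⟨(⌊t⌋).toNat % Q.n, Nat.mod_lt _ Q.npos⟩ +
    Int.fract t • Q.vtx (finNext ⟨(⌊t⌋).toNat % Q.n, Nat.mod_lt _ Q.npos⟩)

/-!
Only two properties of the polygon matter: its region is closed, and no component of the complement
is bounded, so that a bounded set whose boundary lies in the region lies in the region.

If `g` and `h` see each other and both see `x`, the triangle `g h x` is therefore contained in the
region, so every point between `g` and `h` sees `x`. This gives the convexity.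

If `g` and `h` do not see each other, all targets `x` lie on the same side of the line `g h`, and
the part of the triangle `g h x` outside the region does not depend on `x`. The highest point `p`
above `g h` of the closure of that part sees all targets, and the triangles `p h x` and `g p x` have
smaller area than `g h x`. If the feasible region were disconnected, this would contradict the
choice of `g` and `h` in different pieces with the area of `g h x` minimal.
-/

open scoped Topology

section HoleFree

variable {E : Type*} [TopologicalSpace E] [Bornology E] {K R U : Set E}

/-- A set is hole-free if its complement has no bounded component. In the plane this is the property
of a polygon without holes that lets closed curves inside it be filled. -/
def HoleFree (R : Set E) : Prop :=
  ∀ q ∉ R, ¬ Bornology.IsBounded (connectedComponentIn Rᶜ q)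

theorem HoleFree.subset_of_frontier_subset (hR : HoleFree R) (hU : Bornology.IsBounded U)
    (hUR : frontier U ⊆ R) : U ⊆ R := by
  by_contra hsub
  obtain ⟨q, hqU, hqR⟩ := not_subset.1 hsub
  have hcomp : connectedComponentIn Rᶜ q ⊆ interior U ∪ interior Uᶜ :=
    compl_frontier_eq_union_interior (s := U) ▸
      (connectedComponentIn_subset Rᶜ q).trans (compl_subset_compl.2 hUR)
  have hqint : q ∈ interior U := by
    by_contra hq
    exact hqR (hUR ⟨subset_closure hqU, hq⟩)
  have hdisj : Disjoint (interior U) (interior Uᶜ) :=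
    disjoint_compl_right.mono interior_subset interior_subset
  have hinside : connectedComponentIn Rᶜ q ⊆ interior U :=
    isPreconnected_connectedComponentIn.subset_left_of_subset_union isOpen_interior
      isOpen_interior hdisj hcomp ⟨q, mem_connectedComponentIn hqR, hqint⟩
  exact hR q hqR (hU.subset (hinside.trans interior_subset))

/-- The filling of `K`: the union of `K` and the bounded components of its complement. The points
of `K` are included because `connectedComponentIn Kᶜ x` is empty for `x ∈ K`. -/
def filling (K : Set E) : Set E :=
  {x | Bornology.IsBounded (connectedComponentIn Kᶜ x)}

theorem connectedComponentIn_subset_compl_filling {x : E} (hx : x ∉ filling K) :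
    connectedComponentIn Kᶜ x ⊆ (filling K)ᶜ := fun _ hy hyK =>
  hx (show Bornology.IsBounded _ from connectedComponentIn_eq hy ▸ hyK)

theorem subset_filling (K : Set E) : K ⊆ filling K := fun x hx => by
  simp only [filling, mem_ofPred_eq, connectedComponentIn_eq_empty (notMem_compl_iff.2 hx),
    Bornology.isBounded_empty]

theorem mem_connectedComponentIn_of_notMem_filling {x : E} (hx : x ∉ filling K) :
    x ∈ connectedComponentIn Kᶜ x :=
  mem_connectedComponentIn (notMem_subset (subset_filling K) hx)

theorem holeFree_filling (K : Set E) : HoleFree (filling K) := fun _ hq hbdd =>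
  hq <| hbdd.subset <| isPreconnected_connectedComponentIn.subset_connectedComponentIn
    (mem_connectedComponentIn_of_notMem_filling hq) (connectedComponentIn_subset_compl_filling hq)

theorem isClosed_filling [LocallyConnectedSpace E] (hK : IsClosed K) : IsClosed (filling K) := by
  rw [← isOpen_compl_iff, isOpen_iff_forall_mem_open]
  exact fun x hx => ⟨connectedComponentIn Kᶜ x, connectedComponentIn_subset_compl_filling hx,
    hK.isOpen_compl.connectedComponentIn, mem_connectedComponentIn_of_notMem_filling hx⟩

end HoleFree

/-- Were `K` split into two pieces, a pair of points from different pieces minimizing `f` could be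
improved by the point between them. -/
theorem isPreconnected_of_exists_between {E α : Type*} [TopologicalSpace E] [LinearOrder α]
    [TopologicalSpace α] [ClosedIicTopology α] {K : Set E} (hK : IsCompact K) {f : E × E → α}
    (hf : Continuous f)
    (hbetween : ∀ g ∈ K, ∀ h ∈ K, (∃ S ⊆ K, g ∈ S ∧ h ∈ S ∧ IsPreconnected S) ∨
      ∃ p ∈ K, f (p, h) < f (g, h) ∧ f (g, p) < f (g, h)) :
    IsPreconnected K := by
  rw [isPreconnected_closed_iff]
  intro A B hA hB hcover hKA hKB
  obtain ⟨⟨g, h⟩, ⟨⟨hgK, hgA⟩, ⟨hhK, hhB⟩⟩, hmin⟩ :=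
    ((hK.inter_right hA).prod (hK.inter_right hB)).exists_isMinOn (hKA.prod hKB) hf.continuousOn
  rcases hbetween g hgK h hhK with ⟨S, hSK, hgS, hhS, hS⟩ | ⟨p, hpK, hph, hgp⟩
  · exact (isPreconnected_closed_iff.1 hS A B hA hB (hSK.trans hcover) ⟨g, hgS, hgA⟩
      ⟨h, hhS, hhB⟩).mono (inter_subset_inter_left _ hSK)
  · rcases hcover hpK with hpA | hpB
    · exact absurd (hmin (a := (p, h)) ⟨⟨hpK, hpA⟩, ⟨hhK, hhB⟩⟩) (not_le.2 hph)
    · exact absurd (hmin (a := (g, p)) ⟨⟨hgK, hgA⟩, ⟨hpK, hpB⟩⟩) (not_le.2 hgp)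

section Orientation

variable {a b c y : ℝ × ℝ}

/-- The orientation determinant of a triple of points, twice the signed area of the triangle they
span; it is positive when `a`, `b`, `c` are in counterclockwise order. -/
def orient (a b c : ℝ × ℝ) : ℝ := (b.1 - a.1) * (c.2 - a.2) - (b.2 - a.2) * (c.1 - a.1)

theorem orient_rotate (a b c : ℝ × ℝ) : orient b c a = orient a b c := by
  simp only [orient]; ring

theorem orient_swap (a b c : ℝ × ℝ) : orient b a c = -orient a b c := by
  simp only [orient]; ring

theorem orient_self_left (a b : ℝ × ℝ) : orient a b a = 0 := by
  simp only [orient]; ring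

theorem orient_self_right (a b : ℝ × ℝ) : orient a b b = 0 := by
  simp only [orient]; ring

theorem abs_orient_swap_right (a b c : ℝ × ℝ) : |orient a c b| = |orient a b c| := by
  rw [← orient_rotate a c b, orient_swap, abs_neg, orient_rotate]

theorem orient_add_orient_add_orient (a b c y : ℝ × ℝ) :
    orient a b y + orient b c y + orient c a y = orient a b c := by
  simp only [orient]; ring

theorem orient_combo (a b y z : ℝ × ℝ) {s t : ℝ} (hst : s + t = 1) :
    orient a b (s • y + t • z) = s * orient a b y + t * orient a b z := by
  obtain rfl : s = 1 - t := by linarith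
  simp only [orient, Prod.fst_add, Prod.snd_add, Prod.smul_fst, Prod.smul_snd, smul_eq_mul]
  ring

theorem orient_smul_eq_barycentric (a b c y : ℝ × ℝ) :
    orient a b c • y = orient b c y • a + orient c a y • b + orient a b y • c := by
  ext <;> simp only [orient, Prod.fst_add, Prod.snd_add, Prod.smul_fst, Prod.smul_snd,
    smul_eq_mul] <;> ring

theorem orient_eq_zero_of_mem_segment (hy : y ∈ segment ℝ a b) : orient a b y = 0 := by
  obtain ⟨s, t, -, -, hst, rfl⟩ := hy
  rw [orient_combo a b a b hst, orient_self_left, orient_self_right, mul_zero, mul_zero, add_zero]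

theorem continuous_orient (a b : ℝ × ℝ) : Continuous (orient a b) := by
  unfold orient; fun_prop

theorem eventually_orient_pos (hy : 0 < orient a b y) : ∀ᶠ z in 𝓝 y, 0 < orient a b z :=
  continuousAt_const.eventually_lt (continuous_orient a b).continuousAt hy

theorem convex_setOf_orient_nonneg (a b : ℝ × ℝ) : Convex ℝ {y | 0 ≤ orient a b y} := by
  intro y hy z hz s t hs ht hst
  rw [mem_ofPred_eq, orient_combo a b y z hst]
  exact add_nonneg (mul_nonneg hs hy) (mul_nonneg ht hz)

theorem mem_range_lineMap_of_orient_eq_zero (hab : a ≠ b) (hc : orient a b c = 0) :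
    c ∈ range (AffineMap.lineMap a b : ℝ → ℝ × ℝ) := by
  have hnorm : (b.1 - a.1) ^ 2 + (b.2 - a.2) ^ 2 ≠ 0 := fun h0 => hab <| Prod.ext
    (by nlinarith [sq_nonneg (b.1 - a.1), sq_nonneg (b.2 - a.2)])
    (by nlinarith [sq_nonneg (b.1 - a.1), sq_nonneg (b.2 - a.2)])
  -- the parameter of the orthogonal projection of `c` to the line through `a` and `b`
  refine ⟨((c.1 - a.1) * (b.1 - a.1) + (c.2 - a.2) * (b.2 - a.2)) /
    ((b.1 - a.1) ^ 2 + (b.2 - a.2) ^ 2), ?_⟩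
  unfold orient at hc
  rw [AffineMap.lineMap_apply_module']
  ext <;> simp only [Prod.fst_add, Prod.snd_add, Prod.smul_fst, Prod.smul_snd, Prod.fst_sub,
    Prod.snd_sub, smul_eq_mul] <;> field_simp
  · linear_combination (b.2 - a.2) * hc
  · linear_combination (a.1 - b.1) * hc

theorem segment_subset_union_of_orient_eq_zero (hc : orient a b c = 0) :
    segment ℝ a b ⊆ segment ℝ a c ∪ segment ℝ b c := by
  rcases eq_or_ne a b with rfl | hab
  · rw [segment_same, singleton_subset_iff]
    exact Or.inl (left_mem_segment ℝ a c)
  rw [segment_symm ℝ b c, ← insert_endpoints_openSegment, insert_subset_iff, insert_subset_iff]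
  refine ⟨Or.inl (left_mem_segment ℝ a c), Or.inr (right_mem_segment ℝ c b), ?_⟩
  refine (openSegment_subset_union a b (mem_range_lineMap_of_orient_eq_zero hab hc)).trans ?_
  exact insert_subset (Or.inl (right_mem_segment ℝ a c))
    (union_subset_union (openSegment_subset_segment ℝ a c) (openSegment_subset_segment ℝ c b))

theorem collinear_of_orient_eq_zero (hc : orient a b c = 0) : Collinear ℝ {a, b, c} := by
  rcases eq_or_ne a b with rfl | hab
  · rw [insert_eq_of_mem (mem_insert a {c})]
    exact collinear_pair ℝ a c
  obtain ⟨t, rfl⟩ := mem_range_lineMap_of_orient_eq_zero hab hc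
  rw [pair_comm, insert_comm]
  exact collinear_insert_of_mem_affineSpan_pair (AffineMap.lineMap_mem_affineSpan_pair t a b)

end Orientation

section Triangle

variable {a b c x x' y : ℝ × ℝ}

theorem convexHull_triple_rotate (a b c : ℝ × ℝ) :
    convexHull ℝ {b, c, a} = convexHull ℝ {a, b, c} := by
  rw [pair_comm c a, insert_comm b a]

theorem segment_subset_convexHull_triple (a b c : ℝ × ℝ) :
    segment ℝ a b ⊆ convexHull ℝ {a, b, c} :=
  segment_subset_convexHull (mem_insert a _) (mem_insert_of_mem a (mem_insert b _))

theorem right_mem_convexHull_triple (a b c : ℝ × ℝ) : c ∈ convexHull ℝ {a, b, c} :=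
  subset_convexHull ℝ _ (by simp only [mem_insert_iff, mem_singleton_iff, or_true])

theorem isCompact_convexHull_triple (a b c : ℝ × ℝ) : IsCompact (convexHull ℝ {a, b, c}) :=
  (toFinite {a, b, c}).isCompact_convexHull (𝕜 := ℝ)

theorem mem_convexHull_triple_iff (habc : 0 < orient a b c) :
    y ∈ convexHull ℝ {a, b, c} ↔ 0 ≤ orient a b y ∧ 0 ≤ orient b c y ∧ 0 ≤ orient c a y := by
  constructor
  · intro hy
    refine convexHull_min (t := {y | 0 ≤ orient a b y ∧ 0 ≤ orient b c y ∧ 0 ≤ orient c a y}) ?_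
      ((convex_setOf_orient_nonneg a b).inter ((convex_setOf_orient_nonneg b c).inter
        (convex_setOf_orient_nonneg c a))) hy
    have hbca : 0 < orient b c a := by rwa [orient_rotate]
    have hcab : 0 < orient c a b := by rwa [orient_rotate]
    rintro v (rfl | rfl | rfl)
    exacts [⟨(orient_self_left _ _).ge, hbca.le, (orient_self_right _ _).ge⟩,
      ⟨(orient_self_right _ _).ge, (orient_self_left _ _).ge, hcab.le⟩,
      ⟨habc.le, (orient_self_right _ _).ge, (orient_self_left _ _).ge⟩]
  · rintro ⟨hab, hbc, hca⟩
    have hsum := orient_add_orient_add_orient a b c y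
    refine mem_convexHull_of_exists_fintype
      (fun i => (orient a b c)⁻¹ * ![orient b c y, orient c a y, orient a b y] i)
      ![a, b, c] (fun i => mul_nonneg (inv_nonneg.2 habc.le) ?_) ?_ ?_ ?_
    · fin_cases i <;> assumption
    · rw [← Finset.mul_sum, Fin.sum_univ_three, inv_mul_eq_one₀ habc.ne']
      simp only [Matrix.cons_val]
      linarith
    · simp [Fin.forall_fin_succ]
    · simp only [mul_smul, ← Finset.smul_sum, Fin.sum_univ_three, Matrix.cons_val]
      rw [← orient_smul_eq_barycentric, inv_smul_smul₀ habc.ne']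

theorem orient_pos_of_notMem_segment (habc : 0 < orient a b c) (hy : y ∈ convexHull ℝ {a, b, c})
    (hyab : y ∉ segment ℝ a b) : 0 < orient a b y := by
  obtain ⟨hab, hbc, hca⟩ := (mem_convexHull_triple_iff habc).1 hy
  refine hab.lt_of_ne fun h0 => hyab ?_
  have hsum := orient_add_orient_add_orient a b c y
  have hbary := orient_smul_eq_barycentric a b c y
  rw [← h0, zero_smul, add_zero] at hbary
  refine ⟨(orient a b c)⁻¹ * orient b c y, (orient a b c)⁻¹ * orient c a y, by positivity,
    by positivity, ?_, ?_⟩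
  · rw [← mul_add, inv_mul_eq_one₀ habc.ne']
    linarith
  · rw [mul_smul, mul_smul, ← smul_add, ← hbary, inv_smul_smul₀ habc.ne']

theorem orient_pos_of_notMem_legs (habc : 0 < orient a b c) (hy : y ∈ convexHull ℝ {a, b, c})
    (hyac : y ∉ segment ℝ a c) (hybc : y ∉ segment ℝ b c) :
    0 < orient b c y ∧ 0 < orient c a y :=
  ⟨orient_pos_of_notMem_segment (by rwa [orient_rotate]) (by rwa [convexHull_triple_rotate]) hybc,
    orient_pos_of_notMem_segment (c := b) (by rwa [orient_rotate, orient_rotate])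
      (by rwa [convexHull_triple_rotate, convexHull_triple_rotate]) (by rwa [segment_symm])⟩

theorem orient_lt_of_notMem_segment (habc : 0 < orient a b c) (hy : y ∈ convexHull ℝ {a, b, c})
    (hybc : y ∉ segment ℝ b c) : orient a b y < orient a b c := by
  have hbc : 0 < orient b c y := orient_pos_of_notMem_segment (by rwa [orient_rotate])
    (by rwa [convexHull_triple_rotate]) hybc
  have hca : 0 ≤ orient c a y := ((mem_convexHull_triple_iff habc).1 hy).2.2
  linarith [orient_add_orient_add_orient a b c y]

theorem mem_interior_convexHull_triple (hab : 0 < orient a b y) (hbc : 0 < orient b c y)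
    (hca : 0 < orient c a y) : y ∈ interior (convexHull ℝ {a, b, c}) := by
  have habc : 0 < orient a b c := by linarith [orient_add_orient_add_orient a b c y]
  rw [mem_interior_iff_mem_nhds]
  filter_upwards [eventually_orient_pos hab, eventually_orient_pos hbc, eventually_orient_pos hca]
    with z hab hbc hca
  exact (mem_convexHull_triple_iff habc).2 ⟨hab.le, hbc.le, hca.le⟩

theorem mem_interior_union_convexHull_triple (hx : 0 < orient a b x) (hx' : 0 < orient b a x')
    (hbx : 0 < orient b x y) (hxa : 0 < orient x a y) (hax' : 0 < orient a x' y)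
    (hx'b : 0 < orient x' b y) :
    y ∈ interior (convexHull ℝ {a, b, x} ∪ convexHull ℝ {b, a, x'}) := by
  rw [mem_interior_iff_mem_nhds]
  filter_upwards [eventually_orient_pos hbx, eventually_orient_pos hxa, eventually_orient_pos hax',
    eventually_orient_pos hx'b] with z hbx hxa hax' hx'b
  rcases le_total 0 (orient a b z) with hz | hz
  · exact Or.inl ((mem_convexHull_triple_iff hx).2 ⟨hz, hbx.le, hxa.le⟩)
  · exact Or.inr ((mem_convexHull_triple_iff hx').2
      ⟨by linarith [orient_swap a b z], hax'.le, hx'b.le⟩)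

theorem convexHull_triple_subset_sides_of_orient_eq_zero (habc : orient a b c = 0) :
    convexHull ℝ {a, b, c} ⊆ segment ℝ a b ∪ segment ℝ a c ∪ segment ℝ b c := by
  have hull_subset : ∀ {p q r : ℝ × ℝ}, Wbtw ℝ p q r → convexHull ℝ {p, q, r} ⊆ segment ℝ p r := by
    intro p q r hq
    refine convexHull_min ?_ (convex_segment p r)
    rintro v (rfl | rfl | rfl)
    exacts [left_mem_segment ℝ _ _, mem_segment_iff_wbtw.2 hq, right_mem_segment ℝ _ _]
  rcases (collinear_of_orient_eq_zero habc).wbtw_or_wbtw_or_wbtw with hb | hc | ha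
  · exact (hull_subset hb).trans fun z hz => Or.inl (Or.inr hz)
  · rw [← convexHull_triple_rotate, segment_symm ℝ a b]
    exact (hull_subset hc).trans fun z hz => Or.inl (Or.inl hz)
  · rw [← convexHull_triple_rotate, ← convexHull_triple_rotate, segment_symm ℝ b c]
    exact (hull_subset ha).trans subset_union_right

theorem frontier_convexHull_triple_subset_of_orient_pos (habc : 0 < orient a b c) :
    frontier (convexHull ℝ {a, b, c}) ⊆ segment ℝ a b ∪ segment ℝ a c ∪ segment ℝ b c := by
  rw [(isCompact_convexHull_triple a b c).isClosed.frontier_eq]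
  rintro y ⟨hy, hyint⟩
  by_contra hsides
  obtain ⟨⟨hyab, hyac⟩, hybc⟩ : (y ∉ segment ℝ a b ∧ y ∉ segment ℝ a c) ∧ y ∉ segment ℝ b c := by
    simpa only [mem_union, not_or] using hsides
  obtain ⟨hbc, hca⟩ := orient_pos_of_notMem_legs habc hy hyac hybc
  exact hyint (mem_interior_convexHull_triple (orient_pos_of_notMem_segment habc hy hyab) hbc hca)

theorem frontier_convexHull_triple_subset (a b c : ℝ × ℝ) :
    frontier (convexHull ℝ {a, b, c}) ⊆ segment ℝ a b ∪ segment ℝ a c ∪ segment ℝ b c := by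
  rcases lt_trichotomy (orient a b c) 0 with hneg | hzero | hpos
  · rw [insert_comm, segment_symm ℝ a b, union_right_comm]
    exact frontier_convexHull_triple_subset_of_orient_pos (by rw [orient_swap]; linarith)
  · exact (isCompact_convexHull_triple a b c).isClosed.frontier_subset.trans
      (convexHull_triple_subset_sides_of_orient_eq_zero hzero)
  · exact frontier_convexHull_triple_subset_of_orient_pos hpos

end Triangle

section HoleFreePlane

variable {R : Set (ℝ × ℝ)} {a b c g h p x x' : ℝ × ℝ}

theorem HoleFree.convexHull_triple_subset (hR : HoleFree R) (hab : segment ℝ a b ⊆ R)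
    (hac : segment ℝ a c ⊆ R) (hbc : segment ℝ b c ⊆ R) : convexHull ℝ {a, b, c} ⊆ R :=
  hR.subset_of_frontier_subset (isCompact_convexHull_triple a b c).isBounded <|
    (frontier_convexHull_triple_subset a b c).trans (union_subset (union_subset hab hac) hbc)

theorem HoleFree.convexHull_triple_diff_subset (hR : HoleFree R) (hx : 0 < orient g h x)
    (hx' : 0 < orient g h x') (hgx : segment ℝ g x ⊆ R) (hhx : segment ℝ h x ⊆ R)
    (hgx' : segment ℝ g x' ⊆ R) (hhx' : segment ℝ h x' ⊆ R) :
    convexHull ℝ {g, h, x} \ R ⊆ convexHull ℝ {g, h, x'} := by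
  set T := convexHull ℝ {g, h, x}
  set T' := convexHull ℝ {g, h, x'}
  have hTc : IsCompact T := isCompact_convexHull_triple g h x
  have hTc' : IsCompact T' := isCompact_convexHull_triple g h x'
  suffices hdiff : T \ T' ⊆ R from
    fun y hy => by_contra fun hyT' => hy.2 (hdiff ⟨hy.1, hyT'⟩)
  refine hR.subset_of_frontier_subset (hTc.isBounded.subset sdiff_subset) ?_
  rintro y ⟨hyclosure, hyint⟩
  by_contra hyR
  have houtside : T \ T' ⊆ T ∩ ({y | orient h x' y ≤ 0} ∪ {y | orient x' g y ≤ 0}) := by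
    rintro z ⟨hzT, hzT'⟩
    refine ⟨hzT, ?_⟩
    by_contra! hz
    simp only [mem_union, mem_ofPred_eq, not_or, not_le] at hz
    exact hzT' ((mem_convexHull_triple_iff hx').2
      ⟨((mem_convexHull_triple_iff hx).1 hzT).1, hz.1.le, hz.2.le⟩)
  obtain ⟨hyT, hyoutside⟩ := closure_minimal houtside
    (hTc.isClosed.inter ((isClosed_le (continuous_orient h x') continuous_const).union
      (isClosed_le (continuous_orient x' g) continuous_const))) hyclosure
  have hyT' : y ∉ T' := fun hyT' => by
    have hpos := orient_pos_of_notMem_legs hx' hyT' (notMem_subset hgx' hyR)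
      (notMem_subset hhx' hyR)
    exact hyoutside.elim hpos.1.not_ge hpos.2.not_ge
  have hlegs := orient_pos_of_notMem_legs hx hyT (notMem_subset hgx hyR) (notMem_subset hhx hyR)
  have hbase := orient_pos_of_notMem_segment hx hyT
    (notMem_subset (segment_subset_convexHull_triple g h x') hyT')
  refine hyint ?_
  rw [sdiff_eq, interior_inter, hTc'.isClosed.isOpen_compl.interior_eq]
  exact ⟨mem_interior_convexHull_triple hbase hlegs.1 hlegs.2, hyT'⟩

theorem HoleFree.union_convexHull_triple_subset (hR : HoleFree R) (hx : 0 < orient g h x)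
    (hx' : 0 < orient h g x') (hgx : segment ℝ g x ⊆ R) (hhx : segment ℝ h x ⊆ R)
    (hgx' : segment ℝ g x' ⊆ R) (hhx' : segment ℝ h x' ⊆ R) :
    convexHull ℝ {g, h, x} ∪ convexHull ℝ {h, g, x'} ⊆ R := by
  have hT : IsCompact (convexHull ℝ {g, h, x}) := isCompact_convexHull_triple g h x
  have hT' : IsCompact (convexHull ℝ {h, g, x'}) := isCompact_convexHull_triple h g x'
  refine hR.subset_of_frontier_subset (hT.union hT').isBounded ?_
  rw [(hT.union hT').isClosed.frontier_eq]
  rintro y ⟨hy, hyint⟩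
  by_contra hyR
  have hlegs : y ∈ convexHull ℝ {g, h, x} → 0 < orient h x y ∧ 0 < orient x g y := fun hyT =>
    orient_pos_of_notMem_legs hx hyT (notMem_subset hgx hyR) (notMem_subset hhx hyR)
  have hlegs' : y ∈ convexHull ℝ {h, g, x'} → 0 < orient g x' y ∧ 0 < orient x' h y := fun hyT' =>
    orient_pos_of_notMem_legs hx' hyT' (notMem_subset hhx' hyR) (notMem_subset hgx' hyR)
  refine hyint ?_
  by_cases hygh : y ∈ segment ℝ g h
  · obtain ⟨hhxy, hxgy⟩ := hlegs (segment_subset_convexHull_triple g h x hygh)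
    obtain ⟨hgx'y, hx'hy⟩ :=
      hlegs' (segment_subset_convexHull_triple h g x' (segment_symm ℝ g h ▸ hygh))
    exact mem_interior_union_convexHull_triple hx hx' hhxy hxgy hgx'y hx'hy
  · rcases hy with hyT | hyT'
    · exact interior_mono subset_union_left <| mem_interior_convexHull_triple
        (orient_pos_of_notMem_segment hx hyT hygh) (hlegs hyT).1 (hlegs hyT).2
    · exact interior_mono subset_union_right <| mem_interior_convexHull_triple
        (orient_pos_of_notMem_segment hx' hyT' (segment_symm ℝ g h ▸ hygh))
        (hlegs' hyT').1 (hlegs' hyT').2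

theorem HoleFree.orient_pos_of_not_segment_subset (hR : HoleFree R) (hx : 0 < orient g h x)
    (hgx : segment ℝ g x ⊆ R) (hhx : segment ℝ h x ⊆ R) (hgx' : segment ℝ g x' ⊆ R)
    (hhx' : segment ℝ h x' ⊆ R) (hgh : ¬segment ℝ g h ⊆ R) : 0 < orient g h x' := by
  by_contra! hx'
  refine hgh ?_
  rcases hx'.eq_or_lt with hzero | hneg
  · exact (segment_subset_union_of_orient_eq_zero hzero).trans (union_subset hgx' hhx')
  · have hpos : 0 < orient h g x' := by rw [orient_swap]; linarith
    exact (segment_subset_convexHull_triple g h x).trans <| subset_union_left.trans <|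
      hR.union_convexHull_triple_subset hx hpos hgx hhx hgx' hhx'

/-- The points of the open segment are higher than `p` above the line `g h`, hence cannot lie
outside `R`. -/
theorem segment_subset_of_forall_orient_le {T : Set (ℝ × ℝ)} (hR : IsClosed R)
    (hT : Convex ℝ T) (hpT : p ∈ T) (hxT : x ∈ T) (hpx : orient g h p < orient g h x)
    (hmax : ∀ z ∈ T \ R, orient g h z ≤ orient g h p) : segment ℝ p x ⊆ R := by
  rw [← closure_openSegment]
  refine closure_minimal (fun z hz => ?_) hR
  by_contra hzR
  have hle := hmax z ⟨hT.openSegment_subset hpT hxT hz, hzR⟩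
  obtain ⟨s, t, -, ht, hst, rfl⟩ := hz
  rw [orient_combo g h p x hst] at hle
  obtain rfl : s = 1 - t := by linarith
  nlinarith

end HoleFreePlane

section FeasibleRegion

/-- The feasible region of `X` in `R`: the points of `R` that see every point of `X` within `R`. -/
def feasibleRegion {E : Type*} [AddCommGroup E] [Module ℝ E] (R X : Set E) : Set E :=
  {g | g ∈ R ∧ ∀ x ∈ X, segment ℝ g x ⊆ R}

theorem isClosed_feasibleRegion {E : Type*} [AddCommGroup E] [Module ℝ E] [TopologicalSpace E]
    [IsTopologicalAddGroup E] [ContinuousSMul ℝ E] {R : Set E} (hR : IsClosed R) (X : Set E) :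
    IsClosed (feasibleRegion R X) := by
  simp only [feasibleRegion, segment_eq_image, subset_def, forall_mem_image, ofPred_and,
    ofPred_forall]
  exact hR.inter <| isClosed_biInter fun x _ => isClosed_biInter fun θ _ =>
    hR.preimage (f := fun g : E => (1 - θ) • g + θ • x) (by fun_prop)

variable {R X C : Set (ℝ × ℝ)} {g h x : ℝ × ℝ}

theorem HoleFree.convex_inter_feasibleRegion (hR : HoleFree R) (hCR : C ⊆ R) (hC : Convex ℝ C) :
    Convex ℝ (C ∩ feasibleRegion R X) := by
  rw [convex_iff_segment_subset]
  rintro g ⟨hgC, hg⟩ h ⟨hhC, hh⟩ p hp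
  have hghC : segment ℝ g h ⊆ C := hC.segment_subset hgC hhC
  refine ⟨hghC hp, hCR (hghC hp), fun x hx => ?_⟩
  refine subset_trans ?_
    (hR.convexHull_triple_subset (hghC.trans hCR) (hg.2 x hx) (hh.2 x hx))
  exact (convex_convexHull ℝ _).segment_subset (segment_subset_convexHull_triple g h x hp)
    (right_mem_convexHull_triple g h x)

/-- The point is the highest one, above the line `g h`, of the closure of the part of the triangle
that lies outside `R`. That part is the same for all targets `x` in `X`. -/
theorem HoleFree.exists_mem_feasibleRegion_orient_pos (hR : HoleFree R) (hRc : IsClosed R)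
    (hg : g ∈ feasibleRegion R X) (hh : h ∈ feasibleRegion R X) (hx : x ∈ X)
    (hgh : ¬segment ℝ g h ⊆ R) (hpos : 0 < orient g h x) :
    ∃ p ∈ feasibleRegion R X ∩ convexHull ℝ {g, h, x}, 0 < orient g h p := by
  let T : ℝ × ℝ → Set (ℝ × ℝ) := fun x => convexHull ℝ {g, h, x}
  have hTc : ∀ x, IsCompact (T x) := isCompact_convexHull_triple g h
  have hTconv : ∀ x, Convex ℝ (T x) := fun x => convex_convexHull ℝ _
  have hmemT : ∀ x, x ∈ T x := right_mem_convexHull_triple g h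
  have hposX : ∀ x' ∈ X, 0 < orient g h x' := fun x' hx' =>
    hR.orient_pos_of_not_segment_subset hpos (hg.2 x hx) (hh.2 x hx) (hg.2 x' hx') (hh.2 x' hx') hgh
  have hdiff : ∀ y ∈ X, ∀ z ∈ X, T y \ R ⊆ T z := fun y hy z hz =>
    hR.convexHull_triple_diff_subset (hposX y hy) (hposX z hz) (hg.2 y hy) (hh.2 y hy) (hg.2 z hz)
      (hh.2 z hz)
  obtain ⟨r, hrgh, hrR⟩ := not_subset.1 hgh
  have hrT : r ∈ T x := segment_subset_convexHull_triple g h x hrgh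
  have hr0 : orient g h r = 0 := orient_eq_zero_of_mem_segment hrgh
  obtain ⟨p, hp, hpmax⟩ := ((hTc x).isBounded.subset sdiff_subset).isCompact_closure.exists_isMaxOn
    ⟨r, subset_closure ⟨hrT, hrR⟩⟩ (continuous_orient g h).continuousOn
  have hmax : ∀ z ∈ T x \ R, orient g h z ≤ orient g h p := fun z hz => hpmax (subset_closure hz)
  have hpT : ∀ x' ∈ X, p ∈ T x' := fun x' hx' =>
    closure_minimal (hdiff x hx x' hx') (hTc x').isClosed hp
  have hseen : ∀ x' ∈ X, segment ℝ p x' ⊆ R := by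
    intro x' hx'
    by_cases hphx' : p ∈ segment ℝ h x'
    · exact ((convex_segment h x').segment_subset hphx' (right_mem_segment ℝ h x')).trans
        (hh.2 x' hx')
    have hlt : orient g h p < orient g h x' :=
      orient_lt_of_notMem_segment (hposX x' hx') (hpT x' hx') hphx'
    exact segment_subset_of_forall_orient_le hRc (hTconv x') (hpT x' hx') (hmemT x') hlt
      fun z hz => hmax z ⟨hdiff x' hx' x hx hz, hz.2⟩
  refine ⟨p, ⟨⟨hseen x hx (left_mem_segment ℝ p x), hseen⟩, hpT x hx⟩, ?_⟩
  by_contra! hp0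
  exact hrR <| segment_subset_of_forall_orient_le hRc (hTconv x) hrT (hmemT x) (by rwa [hr0])
    (fun z hz => (hmax z hz).trans (by rwa [hr0])) (left_mem_segment ℝ r x)

theorem HoleFree.exists_mem_feasibleRegion_abs_orient_lt (hR : HoleFree R) (hRc : IsClosed R)
    (hg : g ∈ feasibleRegion R X) (hh : h ∈ feasibleRegion R X) (hx : x ∈ X)
    (hgh : ¬segment ℝ g h ⊆ R) :
    ∃ p ∈ feasibleRegion R X ∩ convexHull ℝ {g, h, x},
      |orient x p h| < |orient x g h| ∧ |orient x g p| < |orient x g h| := by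
  wlog hpos : 0 < orient g h x generalizing g h
  · have hneg : orient g h x < 0 := (not_lt.1 hpos).lt_of_ne fun hzero => hgh <|
      (segment_subset_union_of_orient_eq_zero hzero).trans (union_subset (hg.2 x hx) (hh.2 x hx))
    obtain ⟨p, hp, hpg, hhp⟩ := this hh hg (by rwa [segment_symm])
      (by rw [orient_swap]; linarith)
    rw [insert_comm] at hp
    rw [abs_orient_swap_right x g p, abs_orient_swap_right x g h] at hpg
    rw [abs_orient_swap_right x p h, abs_orient_swap_right x g h] at hhp
    exact ⟨p, hp, hhp, hpg⟩
  obtain ⟨p, hp, hp0⟩ := hR.exists_mem_feasibleRegion_orient_pos hRc hg hh hx hgh hpos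
  refine ⟨p, hp, ?_⟩
  obtain ⟨-, hhx, hxg⟩ := (mem_convexHull_triple_iff hpos).1 hp.2
  have hsum := orient_add_orient_add_orient g h x p
  rw [← orient_rotate x p h, ← orient_rotate p h x, ← orient_rotate x g h,
    abs_of_nonneg hhx, abs_of_nonneg hxg, abs_of_pos hpos]
  constructor <;> linarith

theorem HoleFree.isPreconnected_feasibleRegion_inter (hR : HoleFree R) (hRc : IsClosed R)
    (hx : x ∈ X) (hC : IsCompact C) (hCconv : Convex ℝ C) (hxC : x ∈ C) :
    IsPreconnected (feasibleRegion R X ∩ C) := by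
  refine isPreconnected_of_exists_between (hC.inter_left (isClosed_feasibleRegion hRc X))
    (f := fun q => |orient x q.1 q.2|) (by unfold orient; fun_prop) ?_
  rintro g ⟨hg, hgC⟩ h ⟨hh, hhC⟩
  by_cases hgh : segment ℝ g h ⊆ R
  · have hghF : segment ℝ g h ⊆ segment ℝ g h ∩ feasibleRegion R X :=
      (hR.convex_inter_feasibleRegion hgh (convex_segment g h)).segment_subset
        ⟨left_mem_segment ℝ g h, hg⟩ ⟨right_mem_segment ℝ g h, hh⟩
    exact Or.inl ⟨segment ℝ g h, subset_inter (hghF.trans inter_subset_right)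
      (hCconv.segment_subset hgC hhC), left_mem_segment ℝ g h, right_mem_segment ℝ g h,
      (convex_segment g h).isPreconnected⟩
  · obtain ⟨p, ⟨hpF, hpT⟩, hlt⟩ :=
      hR.exists_mem_feasibleRegion_abs_orient_lt hRc hg hh hx hgh
    have hTC : convexHull ℝ {g, h, x} ⊆ C := convexHull_min
      (insert_subset hgC (insert_subset hhC (singleton_subset_iff.2 hxC))) hCconv
    exact Or.inr ⟨p, ⟨hpF, hTC hpT⟩, hlt⟩

theorem HoleFree.isPreconnected_feasibleRegion (hR : HoleFree R) (hRc : IsClosed R)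
    (hX : X.Nonempty) : IsPreconnected (feasibleRegion R X) := by
  obtain ⟨x, hx⟩ := hX
  refine isPreconnected_of_forall_pair fun g hg h hh => ?_
  have hvertices : {g, h, x} ⊆ convexHull ℝ {g, h, x} := subset_convexHull ℝ _
  simp only [insert_subset_iff, singleton_subset_iff] at hvertices
  obtain ⟨hgT, hhT, hxT⟩ := hvertices
  exact ⟨feasibleRegion R X ∩ convexHull ℝ {g, h, x}, inter_subset_left, ⟨hg, hgT⟩, ⟨hh, hhT⟩,
    hR.isPreconnected_feasibleRegion_inter hRc hx (isCompact_convexHull_triple g h x)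
      (convex_convexHull ℝ _) hxT⟩

theorem feasible_region_connected_and_locally_convex_general (hR : IsClosed R)
    (hRhole : HoleFree R) (hX : X.Nonempty) :
    IsPreconnected (feasibleRegion R X) ∧
      ∀ C : Set (ℝ × ℝ), C ⊆ R → Convex ℝ C → Convex ℝ (C ∩ feasibleRegion R X) :=
  ⟨hRhole.isPreconnected_feasibleRegion hR hX, fun _ => hRhole.convex_inter_feasibleRegion⟩

end FeasibleRegion

namespace SimplePolygon

theorem isClosed_boundary (Q : SimplePolygon) : IsClosed Q.boundary :=
  isClosed_iUnion_of_finite fun i => by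
    rw [← convexHull_pair]
    exact (toFinite _).isClosed_convexHull (𝕜 := ℝ)

theorem region_eq_filling (Q : SimplePolygon) : Q.region = filling Q.boundary := by
  ext x
  by_cases hx : x ∈ Q.boundaryᶜ
  · refine ⟨fun hxQ => ?_, fun hbdd => Or.inr fun S hS hSQ hxS => ?_⟩
    · exact hxQ.resolve_left hx _ (isConnected_connectedComponentIn_iff.2 hx)
        (subset_compl_iff_disjoint_right.1 (connectedComponentIn_subset _ x))
        (mem_connectedComponentIn hx)
    · exact Bornology.IsBounded.subset hbdd <|
        hS.isPreconnected.subset_connectedComponentIn hxS (subset_compl_iff_disjoint_right.2 hSQ)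
  · exact iff_of_true (Or.inl (not_not.1 hx)) (subset_filling Q.boundary (not_not.1 hx))

theorem isClosed_region (Q : SimplePolygon) : IsClosed Q.region :=
  Q.region_eq_filling ▸ isClosed_filling Q.isClosed_boundary

theorem holeFree_region (Q : SimplePolygon) : HoleFree Q.region :=
  Q.region_eq_filling ▸ holeFree_filling Q.boundary

end SimplePolygon

/--
Let `P` be a simple polygon and let `[a,b]` be a polygonal chain of
its boundary (parametrized as `param '' [s,t]`).  The feasible region `F([a,b])`,
consisting of all points of `P` that see every point of the chain, is connected;
moreover, for every convex subset `C` of `P`, the intersection `C ∩ F([a,b])` is convex.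
-/
theorem feasible_region_connected_and_locally_convex (Q : SimplePolygon)
    (s t : ℝ) (hs : 0 ≤ s) (hst : s ≤ t)
    (F : Set (ℝ × ℝ))
    (hF : F = {g | g ∈ Q.region ∧
      ∀ x ∈ Q.param '' Set.Icc s t, segment ℝ g x ⊆ Q.region}) :
    IsPreconnected F ∧
      ∀ C : Set (ℝ × ℝ), C ⊆ Q.region → Convex ℝ C → Convex ℝ (C ∩ F) := by
  subst hF
  exact feasible_region_connected_and_locally_convex_general Q.isClosed_region Q.holeFree_region
    ((nonempty_Icc.2 hst).image Q.param)
end
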